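/- arXiv:1509.08510 — 4 statements merged into one kernel-verified Lean document; each statement's English description precedes it below -/
import Mathlib

section
/- Sharp bilinear estimate: for every s ≥ 0 there is a constant C = C_s > 0 such that for all u, v ∈ H^s(ℝ), ‖ω(∂_x)(uv)‖_{H^s} ≤ C ‖u‖_{H^s} ‖v‖_{H^s}, where ω(∂_x) is the Fourier multiplier operator with symbol ω(ξ) = |ξ|/(1 + ξ²). -/
/-!
STATEMENT 4 (sharp bilinear estimate, Lemma 2.3 of Bona–Carvajal–Panthee–Scialom):
for every `s ≥ 0` there is `C = C_s > 0` such that for all `u, v ∈ Hˢ(ℝ)`,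
`‖ω(∂ₓ)(uv)‖_{Hˢ} ≤ C ‖u‖_{Hˢ} ‖v‖_{Hˢ}`, where `ω(∂ₓ)` is the Fourier multiplier
with symbol `ω(k) = |k|/(1+k²)`.

The Sobolev space `Hˢ(ℝ)` is formalized on the Fourier side.  With Mathlib's
Fourier transform `𝓕 f ξ = ∫ e^{-2πixξ} f x dx`, the classical frequency variable
is `k = 2πξ` and `∫ (1+(2πξ)²)^s ‖𝓕 f ξ‖² dξ = ∫ (1+k²)^s |f̂(k)|² dk`, which is
exactly the classical squared `Hˢ` norm (with `f̂(k) = (2π)^{-1/2}∫ e^{-ixk} f dx`).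
Membership is stated for integrable representatives, so that the Fourier integral
is the honest Fourier transform.
-/

noncomputable section
open MeasureTheory Real Set
open scoped FourierTransform

/-- Squared `Hˢ(ℝ)` norm, computed on the Fourier side. -/
def hNormSq (s : ℝ) (f : ℝ → ℂ) : ℝ :=
  ∫ ξ : ℝ, (1 + (2 * π * ξ) ^ 2) ^ s * ‖𝓕 f ξ‖ ^ 2

/-- The `Hˢ(ℝ)` norm. -/
def hNorm (s : ℝ) (f : ℝ → ℂ) : ℝ :=
  Real.sqrt (hNormSq s f)

/-- Membership in `Hˢ(ℝ)`. -/
def MemHs (s : ℝ) (f : ℝ → ℂ) : Prop :=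
  Integrable f ∧ Integrable (fun ξ : ℝ => (1 + (2 * π * ξ) ^ 2) ^ s * ‖𝓕 f ξ‖ ^ 2)

/-- The `Hˢ` norm of `m(∂ₓ) g`, where `m : ℝ → ℂ` is a Fourier multiplier symbol in
the classical frequency variable `k = 2πξ`. -/
def multHNorm (s : ℝ) (m : ℝ → ℂ) (g : ℝ → ℂ) : ℝ :=
  Real.sqrt (∫ ξ : ℝ, (1 + (2 * π * ξ) ^ 2) ^ s * ‖m (2 * π * ξ) * 𝓕 g ξ‖ ^ 2)

/-- An integrable function whose Fourier transform is square integrable is itself square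
integrable, and its Fourier integral represents its `L²` Fourier transform. -/
theorem exists_lp_fourier_eq {u : ℝ → ℂ} (hu : Integrable u) (hu2 : MemLp (𝓕 u) 2) :
    ∃ U : Lp ℂ 2 (volume : Measure ℝ), U =ᵐ[volume] u ∧
      (𝓕 U : Lp ℂ 2 (volume : Measure ℝ)) =ᵐ[volume] 𝓕 u := by
  set U : Lp ℂ 2 (volume : Measure ℝ) := 𝓕⁻ (hu2.toLp (𝓕 u))
  have hFU : 𝓕 U = hu2.toLp (𝓕 u) := FourierTransform.fourier_fourierInv_eq _
  refine ⟨U, ?_, hFU ▸ hu2.coeFn_toLp⟩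
  have key (g : SchwartzMap ℝ ℂ) : ∫ x, g x • U x = ∫ x, g x • u x := by
    obtain ⟨φ, rfl⟩ : ∃ φ : SchwartzMap ℝ ℂ, 𝓕 φ = g :=
      ⟨𝓕⁻ g, FourierTransform.fourier_fourierInv_eq g⟩
    calc ∫ x, (𝓕 φ) x • U x = (𝓕 (Lp.toTemperedDistribution U)) φ := by
          rw [TemperedDistribution.fourier_apply, Lp.toTemperedDistribution_apply]
      _ = ∫ x, φ x • (hu2.toLp (𝓕 u)) x := by
          rw [Lp.fourier_toTemperedDistribution_eq, hFU, Lp.toTemperedDistribution_apply]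
      _ = ∫ x, φ x • 𝓕 u x := by
          refine integral_congr_ae ?_
          filter_upwards [hu2.coeFn_toLp] with x hx
          rw [hx]
      _ = ∫ x, 𝓕 (φ : ℝ → ℂ) x • u x := by
          have h := VectorFourier.integral_fourierIntegral_smul_eq_flip (μ := volume)
            (L := innerₗ ℝ) Real.continuous_fourierChar continuous_inner φ.integrable hu
          rw [flip_innerₗ] at h
          exact h.symm
      _ = ∫ x, (𝓕 φ) x • u x := by rw [SchwartzMap.fourier_coe]
  refine ae_eq_of_integral_contDiff_smul_eq ((Lp.memLp U).locallyIntegrable one_le_two)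
    hu.locallyIntegrable fun g g_smooth g_cpt => ?_
  have hg₁ : HasCompactSupport (Complex.ofRealCLM ∘ g) := g_cpt.comp_left rfl
  have hg₂ : ContDiff ℝ _ (Complex.ofRealCLM ∘ g) := Complex.ofRealCLM.contDiff.comp g_smooth
  simpa using key (hg₁.toSchwartzMap hg₂)

/-- The Fourier transform of a product is the convolution of the Fourier transforms. -/
theorem fourier_mul_eq_integral {u v : ℝ → ℂ} (hu : Integrable u) (hu2 : MemLp (𝓕 u) 2)
    (hv : Integrable v) (hv2 : MemLp (𝓕 v) 2) (ξ : ℝ) :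
    𝓕 (fun x => u x * v x) ξ = ∫ η, 𝓕 u η * 𝓕 v (ξ - η) := by
  set w : ℝ → ℂ := fun x => starRingEnd ℂ ((𝐞 (-(x * ξ)) : ℂ) * v x) with hw_def
  have hcont : Continuous fun x : ℝ => (𝐞 (-(x * ξ)) : ℂ) := by fun_prop
  have hw : Integrable w := by
    refine hv.mono ?_ (.of_forall fun x => by simp [hw_def, Circle.norm_coe])
    exact Complex.continuous_conj.comp_aestronglyMeasurable
      (hcont.aestronglyMeasurable.mul hv.aestronglyMeasurable)
  have hFw : 𝓕 w = fun η => starRingEnd ℂ (𝓕 v (ξ - η)) := by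
    ext η
    rw [Real.fourier_real_eq, Real.fourier_real_eq, ← integral_conj]
    refine integral_congr_ae (.of_forall fun x => ?_)
    simp only [hw_def, Circle.smul_def, smul_eq_mul, map_mul, ← mul_assoc, ← Circle.coe_inv_eq_conj,
      ← AddChar.map_neg_eq_inv, ← Circle.coe_mul, ← AddChar.map_add_eq_mul]
    congr 4
    ring
  have hFw2 : MemLp (𝓕 w) 2 := by
    rw [hFw]
    exact (hv2.comp_measurePreserving (Measure.measurePreserving_sub_left volume ξ)).star
  obtain ⟨U, hU, hFU⟩ := exists_lp_fourier_eq hu hu2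
  obtain ⟨W, hW, hFW⟩ := exists_lp_fourier_eq hw hFw2
  have h := Lp.inner_fourier_eq W U
  rw [L2.inner_def, L2.inner_def] at h
  rw [Real.fourier_real_eq]
  calc ∫ x, 𝐞 (-(x * ξ)) • (u x * v x) = ∫ x, inner ℂ (W x) (U x) := by
        refine integral_congr_ae ?_
        filter_upwards [hU, hW] with x hx hx'
        rw [hx, hx', RCLike.inner_apply, hw_def, Complex.conj_conj, Circle.smul_def, smul_eq_mul]
        ring
    _ = ∫ η, 𝓕 u η * 𝓕 v (ξ - η) := by
        rw [← h]
        refine integral_congr_ae ?_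
        filter_upwards [hFU, hFW] with x hx hx'
        rw [hx, hx', RCLike.inner_apply, hFw, Complex.conj_conj]

theorem MemHs.memLp_fourier {s : ℝ} (hs : 0 ≤ s) {u : ℝ → ℂ} (hu : MemHs s u) :
    MemLp (𝓕 u) 2 := by
  have hc : Continuous (𝓕 u) := VectorFourier.fourierIntegral_continuous
    Real.continuous_fourierChar continuous_inner hu.1
  rw [memLp_two_iff_integrable_sq_norm hc.aestronglyMeasurable]
  refine hu.2.mono (by fun_prop) (.of_forall fun ξ => ?_)
  have h1 : 1 ≤ (1 + (2 * π * ξ) ^ 2) ^ s :=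
    Real.one_le_rpow (by nlinarith [sq_nonneg (2 * π * ξ)]) hs
  rw [Real.norm_of_nonneg (by positivity), Real.norm_of_nonneg (by positivity)]
  exact le_mul_of_one_le_left (by positivity) h1

theorem hNormSq_nonneg (s : ℝ) (f : ℝ → ℂ) : 0 ≤ hNormSq s f :=
  integral_nonneg fun _ => by positivity

/-- The square root of the density defining the `Hˢ` norm is square integrable. -/
theorem MemHs.memLp_weight {s : ℝ} {u : ℝ → ℂ} (hu : MemHs s u) :
    MemLp (fun ξ : ℝ => (1 + (2 * π * ξ) ^ 2) ^ (s / 2) * ‖𝓕 u ξ‖) 2 := by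
  have hc : Continuous (𝓕 u) := VectorFourier.fourierIntegral_continuous
    Real.continuous_fourierChar continuous_inner hu.1
  have hm : AEStronglyMeasurable (fun ξ : ℝ => (1 + (2 * π * ξ) ^ 2) ^ (s / 2) * ‖𝓕 u ξ‖) :=
    (by fun_prop : Measurable _).aestronglyMeasurable
  rw [memLp_two_iff_integrable_sq hm]
  refine hu.2.congr (.of_forall fun ξ => ?_)
  beta_reduce
  rw [mul_pow _ ‖𝓕 u ξ‖, ← Real.rpow_mul_natCast (by positivity)]
  congr 2
  push_cast
  ring

theorem integral_weight_sq (s : ℝ) (u : ℝ → ℂ) :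
    ∫ ξ : ℝ, ((1 + (2 * π * ξ) ^ 2) ^ (s / 2) * ‖𝓕 u ξ‖) ^ (2 : ℝ) = hNormSq s u := by
  refine integral_congr_ae (.of_forall fun ξ => ?_)
  simp only
  rw [Real.rpow_two, mul_pow, ← Real.rpow_mul_natCast (by positivity)]
  congr 2
  push_cast
  ring

/-- Submultiplicativity, up to a constant, of the Sobolev weight. -/
theorem weight_le {t : ℝ} (ht : 0 ≤ t) (ξ η : ℝ) :
    (1 + (2 * π * ξ) ^ 2) ^ t ≤
      2 ^ t * ((1 + (2 * π * η) ^ 2) ^ t * (1 + (2 * π * (ξ - η)) ^ 2) ^ t) := by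
  rw [← Real.mul_rpow (by positivity) (by positivity),
    ← Real.mul_rpow (by positivity) (by positivity)]
  refine Real.rpow_le_rpow (by positivity) ?_ ht
  have h : 2 * π * ξ = 2 * π * η + 2 * π * (ξ - η) := by ring
  rw [h]
  nlinarith [sq_nonneg (2 * π * η - 2 * π * (ξ - η)),
    mul_nonneg (sq_nonneg (2 * π * η)) (sq_nonneg (2 * π * (ξ - η)))]

/-- Pointwise bound for the weighted Fourier transform of a product. -/
theorem weight_mul_norm_fourier_mul_le {s : ℝ} (hs : 0 ≤ s) {u v : ℝ → ℂ}
    (hu : MemHs s u) (hv : MemHs s v) (ξ : ℝ) :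
    (1 + (2 * π * ξ) ^ 2) ^ (s / 2) * ‖𝓕 (fun x => u x * v x) ξ‖ ≤
      2 ^ (s / 2) * (hNorm s u * hNorm s v) := by
  set A : ℝ → ℝ := fun η => (1 + (2 * π * η) ^ 2) ^ (s / 2) * ‖𝓕 u η‖ with hA
  set B : ℝ → ℝ := fun η => (1 + (2 * π * η) ^ 2) ^ (s / 2) * ‖𝓕 v η‖ with hB
  have hA2 : MemLp A 2 := hu.memLp_weight
  have hB2 : MemLp (fun η => B (ξ - η)) 2 :=
    hv.memLp_weight.comp_measurePreserving (Measure.measurePreserving_sub_left volume ξ)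
  have hAB : Integrable fun η => A η * B (ξ - η) := hA2.integrable_mul hB2
  have hCS : ∫ η, A η * B (ξ - η) ≤ hNorm s u * hNorm s v := by
    have h := integral_mul_le_Lp_mul_Lq_of_nonneg (μ := (volume : Measure ℝ))
      Real.HolderConjugate.two_two
      (f := A) (g := fun η => B (ξ - η)) (.of_forall fun η => by positivity)
      (.of_forall fun η => by positivity) (by simpa using hA2) (by simpa using hB2)
    rw [integral_sub_left_eq_self (fun η => B η ^ (2 : ℝ)) volume ξ, integral_weight_sq,
      integral_weight_sq, ← Real.sqrt_eq_rpow, ← Real.sqrt_eq_rpow] at h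
    exact h
  rw [fourier_mul_eq_integral hu.1 (hu.memLp_fourier hs) hv.1 (hv.memLp_fourier hs)]
  calc (1 + (2 * π * ξ) ^ 2) ^ (s / 2) * ‖∫ η, 𝓕 u η * 𝓕 v (ξ - η)‖
      ≤ (1 + (2 * π * ξ) ^ 2) ^ (s / 2) * ∫ η, ‖𝓕 u η * 𝓕 v (ξ - η)‖ := by
        gcongr
        exact norm_integral_le_integral_norm _
    _ = ∫ η, (1 + (2 * π * ξ) ^ 2) ^ (s / 2) * ‖𝓕 u η * 𝓕 v (ξ - η)‖ :=
        (integral_const_mul _ _).symm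
    _ ≤ ∫ η, 2 ^ (s / 2) * (A η * B (ξ - η)) := by
        refine integral_mono_of_nonneg (.of_forall fun η => by positivity)
          (hAB.const_mul _) (.of_forall fun η => ?_)
        simp only [hA, hB]
        rw [norm_mul]
        refine (mul_le_mul_of_nonneg_right (weight_le (by positivity) ξ η)
          (by positivity)).trans_eq ?_
        ring
    _ ≤ 2 ^ (s / 2) * (hNorm s u * hNorm s v) := by
        rw [integral_const_mul]
        gcongr

/-- **Sharp bilinear estimate**: `‖ω(∂ₓ)(uv)‖_{Hˢ} ≤ C ‖u‖_{Hˢ} ‖v‖_{Hˢ}` for `s ≥ 0`,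
where `ω(k) = |k|/(1+k²)`. -/
theorem sharp_bilinear_estimate (s : ℝ) (hs : 0 ≤ s) :
    ∃ C > 0, ∀ u v : ℝ → ℂ, MemHs s u → MemHs s v →
      multHNorm s (fun k : ℝ => ((|k| / (1 + k ^ 2) : ℝ) : ℂ)) (fun x => u x * v x) ≤
        C * hNorm s u * hNorm s v := by
  have hInt : Integrable fun ξ : ℝ => (1 + (2 * π * ξ) ^ 2)⁻¹ :=
    integrable_inv_one_add_sq.comp_mul_left' (by positivity)
  set M : ℝ := ∫ ξ : ℝ, (1 + (2 * π * ξ) ^ 2)⁻¹ with hM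
  have hM0 : 0 ≤ M := integral_nonneg fun ξ => by positivity
  refine ⟨√M * 2 ^ (s / 2) + 1, by positivity, fun u v hu hv => ?_⟩
  have hu0 : 0 ≤ hNorm s u := Real.sqrt_nonneg _
  have hv0 : 0 ≤ hNorm s v := Real.sqrt_nonneg _
  set K : ℝ := 2 ^ (s / 2) * (hNorm s u * hNorm s v) with hK
  have hK0 : 0 ≤ K := by positivity
  have hle : multHNorm s (fun k : ℝ => ((|k| / (1 + k ^ 2) : ℝ) : ℂ)) (fun x => u x * v x) ≤
      √M * K := by
    rw [multHNorm, ← Real.sqrt_sq hK0, ← Real.sqrt_mul hM0]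
    refine Real.sqrt_le_sqrt ?_
    rw [hM, ← integral_mul_const]
    refine integral_mono_of_nonneg (.of_forall fun ξ => by positivity)
      (hInt.mul_const _) (.of_forall fun ξ => ?_)
    have hb := weight_mul_norm_fourier_mul_le hs hu hv ξ
    have hJ : (1 + (2 * π * ξ) ^ 2) ^ s = ((1 + (2 * π * ξ) ^ 2) ^ (s / 2)) ^ 2 := by
      rw [← Real.rpow_mul_natCast (by positivity)]
      congr 1
      push_cast
      ring
    have hω : (|2 * π * ξ| / (1 + (2 * π * ξ) ^ 2)) ^ 2 ≤ (1 + (2 * π * ξ) ^ 2)⁻¹ := by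
      rw [div_pow, sq_abs, inv_eq_one_div, div_le_div_iff₀ (by positivity) (by positivity)]
      nlinarith [sq_nonneg (2 * π * ξ)]
    simp only
    rw [norm_mul, Complex.norm_real, Real.norm_of_nonneg (by positivity), hJ]
    calc _ = (|2 * π * ξ| / (1 + (2 * π * ξ) ^ 2)) ^ 2 *
          ((1 + (2 * π * ξ) ^ 2) ^ (s / 2) * ‖𝓕 (fun x => u x * v x) ξ‖) ^ 2 := by ring
      _ ≤ _ := by gcongr
  refine hle.trans ?_
  have : 0 ≤ hNorm s u * hNorm s v := mul_nonneg hu0 hv0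
  rw [hK]
  linarith
end
end

section
/- Bilinear estimate for τ(∂_x): let γ1 > 0, δ1 > 0 and γ be real constants. For every s ≥ 0 there is a constant C = C_s > 0 such that for all η ∈ H^s(ℝ), ‖τ(∂_x)(η²)‖_{H^s} ≤ C ‖η‖_{H^s}², where τ(∂_x) is the Fourier multiplier operator with symbol τ(ξ) = (3ξ − 4γξ³)/(4(1 + γ1ξ² + δ1ξ⁴)). -/
noncomputable section
open MeasureTheory Real Set
open scoped FourierTransform

/-- On `L¹ ∩ L²` the Plancherel transform is given by the Fourier integral. -/
theorem coeFn_fourier_toLp_ae_eq {f : ℝ → ℂ} (hf : Integrable f) (hf₂ : MemLp f 2) :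
    ((𝓕 (hf₂.toLp f) : Lp ℂ 2 (volume : Measure ℝ)) : ℝ → ℂ) =ᵐ[volume] 𝓕 f := by
  have hcont : Continuous (𝓕 f) :=
    VectorFourier.fourierIntegral_continuous Real.continuous_fourierChar
      (L := innerₗ ℝ) (by fun_prop) hf
  refine ae_eq_of_integral_contDiff_smul_eq
    ((Lp.memLp _).locallyIntegrable (by norm_num)) hcont.locallyIntegrable fun g hg hg_supp => ?_
  let φ : SchwartzMap ℝ ℂ :=
    HasCompactSupport.toSchwartzMap (f := fun x => (g x : ℂ))
      (hg_supp.comp_left (g := Complex.ofReal) rfl) (Complex.ofRealCLM.contDiff.comp hg)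
  have hφ : ∀ x, φ x = g x := fun _ => rfl
  have h := congrArg (fun T => T φ) (Lp.fourier_toTemperedDistribution_eq (hf₂.toLp f))
  simp only [TemperedDistribution.fourier_apply, Lp.toTemperedDistribution_apply,
    SchwartzMap.fourier_coe] at h
  have hflip : ∫ ξ, 𝓕 f ξ • φ ξ = ∫ x, f x • 𝓕 (φ : ℝ → ℂ) x := by
    have h_swap := VectorFourier.integral_fourierIntegral_smul_eq_flip (L := innerₗ ℝ)
      Real.continuous_fourierChar (by fun_prop) hf (φ.integrable (μ := volume))
    rwa [flip_innerₗ] at h_swap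
  calc
    _ = ∫ x, φ x • (𝓕 (hf₂.toLp f) : Lp ℂ 2 (volume : Measure ℝ)) x := by
      simp [hφ]
    _ = ∫ x, 𝓕 (φ : ℝ → ℂ) x • (hf₂.toLp f) x := h.symm
    _ = ∫ x, f x • 𝓕 (φ : ℝ → ℂ) x := by
      refine integral_congr_ae ?_
      filter_upwards [hf₂.coeFn_toLp] with x hx
      rw [hx, smul_eq_mul, smul_eq_mul, mul_comm]
    _ = ∫ ξ, 𝓕 f ξ • φ ξ := hflip.symm
    _ = _ := by simp [hφ, mul_comm]

/-- Plancherel's theorem for the Fourier integral on `L¹ ∩ L²`. -/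
theorem integral_conj_fourier_mul_fourier {f g : ℝ → ℂ} (hf : Integrable f) (hf₂ : MemLp f 2)
    (hg : Integrable g) (hg₂ : MemLp g 2) :
    ∫ ξ, starRingEnd ℂ (𝓕 f ξ) * 𝓕 g ξ = ∫ x, starRingEnd ℂ (f x) * g x := by
  have h := Lp.inner_fourier_eq (hf₂.toLp f) (hg₂.toLp g)
  simp only [L2.inner_def] at h
  calc
    _ = _ := integral_congr_ae ?_
    _ = _ := h
    _ = _ := integral_congr_ae ?_
  · filter_upwards [coeFn_fourier_toLp_ae_eq hf hf₂, coeFn_fourier_toLp_ae_eq hg hg₂] with x h₁ h₂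
    rw [h₁, h₂, RCLike.inner_apply, mul_comm]
  · filter_upwards [hf₂.coeFn_toLp, hg₂.coeFn_toLp] with x h₁ h₂
    rw [h₁, h₂, RCLike.inner_apply, mul_comm]

/-- The Fourier transform of a square is the self-convolution of the Fourier transform. -/
theorem fourier_sq_eq_integral {f : ℝ → ℂ} (hf : Integrable f)
    (hsq : Integrable fun x => f x ^ 2) (ξ : ℝ) :
    𝓕 (fun x => f x ^ 2) ξ = ∫ ζ, 𝓕 f (-ζ) * 𝓕 f (ζ + ξ) := by
  have hf₂ : MemLp f 2 := by
    rw [memLp_two_iff_integrable_sq_norm hf.aestronglyMeasurable]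
    simpa using hsq.norm
  have hconj : Integrable fun x => starRingEnd ℂ (f x) :=
    (Complex.conjLIE.toContinuousLinearEquiv.toContinuousLinearMap).integrable_comp hf
  have hconj₂ : MemLp (fun x => starRingEnd ℂ (f x)) 2 := hf₂.star
  have hmod : Integrable fun x => (𝐞 (-(x * ξ)) : ℂ) * f x := by
    have hcont : Continuous fun x : ℝ => (𝐞 (-(x * ξ)) : ℂ) := by fun_prop
    refine hf.mono (hcont.aestronglyMeasurable.mul hf.aestronglyMeasurable)
      (ae_of_all _ fun x => by rw [norm_mul, Circle.norm_coe, one_mul])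
  have hmod₂ : MemLp (fun x => (𝐞 (-(x * ξ)) : ℂ) * f x) 2 :=
    hf₂.of_le hmod.aestronglyMeasurable
      (ae_of_all _ fun x => by rw [norm_mul, Circle.norm_coe, one_mul])
  have h := integral_conj_fourier_mul_fourier hconj hconj₂ hmod hmod₂
  have h₁ : ∀ ζ, starRingEnd ℂ (𝓕 (fun x => starRingEnd ℂ (f x)) ζ) = 𝓕 f (-ζ) := by
    intro ζ
    rw [Real.fourier_real_eq, Real.fourier_real_eq, ← integral_conj]
    refine integral_congr_ae (ae_of_all _ fun x => ?_)
    simp [Circle.smul_def, ← Circle.coe_inv_eq_conj, ← AddChar.map_neg_eq_inv]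
  have h₂ : ∀ ζ, 𝓕 (fun x => (𝐞 (-(x * ξ)) : ℂ) * f x) ζ = 𝓕 f (ζ + ξ) := by
    intro ζ
    rw [Real.fourier_real_eq, Real.fourier_real_eq]
    refine integral_congr_ae (ae_of_all _ fun x => ?_)
    simp only [Circle.smul_def, smul_eq_mul]
    rw [mul_add, neg_add, AddChar.map_add_eq_mul, Circle.coe_mul, mul_assoc]
  simp only [h₁, h₂] at h
  rw [h, Real.fourier_real_eq]
  refine integral_congr_ae (ae_of_all _ fun x => ?_)
  simp only [Circle.smul_def, smul_eq_mul, RingHomCompTriple.comp_apply, RingHom.id_apply]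
  ring

/-- Peetre's inequality for the weight of `Hˢ`. -/
theorem one_add_sq_rpow_le {s : ℝ} (hs : 0 ≤ s) (a b : ℝ) :
    (1 + (a + b) ^ 2) ^ s ≤ 2 ^ s * ((1 + a ^ 2) ^ s * (1 + b ^ 2) ^ s) := by
  rw [← mul_rpow (by positivity) (by positivity), ← mul_rpow (by positivity) (by positivity)]
  refine rpow_le_rpow (by positivity) ?_ hs
  nlinarith [sq_nonneg (a - b), sq_nonneg (a * b)]

/-- Pointwise bound for the weighted Fourier transform of a square. -/
theorem weight_mul_norm_fourier_sq_le {s : ℝ} (hs : 0 ≤ s) {f : ℝ → ℂ} (hf : MemHs s f) (ξ : ℝ) :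
    (1 + (2 * π * ξ) ^ 2) ^ s * ‖𝓕 (fun x => f x ^ 2) ξ‖ ^ 2 ≤ 2 ^ s * hNormSq s f ^ 2 := by
  by_cases hsq : Integrable fun x => f x ^ 2
  swap
  · have h0 : 𝓕 (fun x => f x ^ 2) ξ = 0 := by
      rw [Real.fourier_eq]
      exact integral_undef fun h => hsq ((Real.fourierIntegral_convergent_iff ξ).1 h)
    rw [h0]
    simp only [norm_zero, ne_eq, OfNat.ofNat_ne_zero, not_false_eq_true, zero_pow, mul_zero]
    positivity
  set w : ℝ → ℝ := fun k => (1 + (2 * π * k) ^ 2) ^ (s / 2) with hw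
  have hw0 : ∀ k, 0 ≤ w k := fun k => by positivity
  have hwsq : ∀ k, w k ^ 2 = (1 + (2 * π * k) ^ 2) ^ s := fun k => by
    rw [hw, ← rpow_mul_natCast (by positivity)]
    norm_num
  set G : ℝ → ℝ := fun k => (1 + (2 * π * k) ^ 2) ^ s * ‖𝓕 f k‖ ^ 2
  have hGint : Integrable G := hf.2
  have hGsq : ∀ k, G k = (w k * ‖𝓕 f k‖) ^ 2 := fun k => by rw [mul_pow, hwsq]
  have hbound : w ξ * ‖𝓕 (fun x => f x ^ 2) ξ‖ ≤ 2 ^ (s / 2) * hNormSq s f := by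
    have hneg : Integrable fun ζ => G (-ζ) := hGint.comp_neg
    have hadd : Integrable fun ζ => G (ζ + ξ) := hGint.comp_add_right ξ
    calc
      _ ≤ w ξ * ∫ ζ, ‖𝓕 f (-ζ) * 𝓕 f (ζ + ξ)‖ := by
        rw [fourier_sq_eq_integral hf.1 hsq]
        exact mul_le_mul_of_nonneg_left (norm_integral_le_integral_norm _) (hw0 ξ)
      _ = ∫ ζ, w ξ * ‖𝓕 f (-ζ) * 𝓕 f (ζ + ξ)‖ := (integral_const_mul _ _).symm
      _ ≤ ∫ ζ, 2 ^ (s / 2) * ((G (-ζ) + G (ζ + ξ)) / 2) := by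
        refine integral_mono_of_nonneg
          (ae_of_all _ fun ζ => mul_nonneg (hw0 ξ) (norm_nonneg _))
          (((hneg.add hadd).div_const 2).const_mul _) (ae_of_all _ fun ζ => ?_)
        have hpeetre : w ξ ≤ 2 ^ (s / 2) * (w (-ζ) * w (ζ + ξ)) := by
          have := one_add_sq_rpow_le (div_nonneg hs zero_le_two) (2 * π * -ζ) (2 * π * (ζ + ξ))
          rwa [show 2 * π * -ζ + 2 * π * (ζ + ξ) = 2 * π * ξ by ring] at this
        calc
          w ξ * ‖𝓕 f (-ζ) * 𝓕 f (ζ + ξ)‖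
              ≤ 2 ^ (s / 2) * (w (-ζ) * w (ζ + ξ)) * ‖𝓕 f (-ζ) * 𝓕 f (ζ + ξ)‖ := by gcongr
          _ = 2 ^ (s / 2) * ((w (-ζ) * ‖𝓕 f (-ζ)‖) * (w (ζ + ξ) * ‖𝓕 f (ζ + ξ)‖)) := by
            rw [norm_mul]
            ring
          _ ≤ _ := by
            simp only [hGsq]
            gcongr
            linarith [two_mul_le_add_sq (w (-ζ) * ‖𝓕 f (-ζ)‖) (w (ζ + ξ) * ‖𝓕 f (ζ + ξ)‖)]
      _ = 2 ^ (s / 2) * hNormSq s f := by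
        rw [integral_const_mul, integral_div, integral_add hneg hadd,
          integral_neg_eq_self, integral_add_right_eq_self, add_self_div_two]
        rfl
  calc
    _ = (w ξ * ‖𝓕 (fun x => f x ^ 2) ξ‖) ^ 2 := by rw [mul_pow (w ξ), hwsq]
    _ ≤ (2 ^ (s / 2) * hNormSq s f) ^ 2 :=
      pow_le_pow_left₀ (mul_nonneg (hw0 ξ) (norm_nonneg _)) hbound 2
    _ = _ := by
      rw [mul_pow, ← rpow_mul_natCast (by norm_num)]
      norm_num

/-- The symbol `τ` decays like `|k|⁻¹`. -/
theorem exists_sq_tau_le (γ1 δ1 γ : ℝ) (hγ1 : 0 < γ1) (hδ1 : 0 < δ1) :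
    ∃ A > 0, ∀ k : ℝ,
      ((3 * k - 4 * γ * k ^ 3) / (4 * (1 + γ1 * k ^ 2 + δ1 * k ^ 4))) ^ 2 ≤ A * (1 + k ^ 2)⁻¹ := by
  have hc : 0 < min 1 δ1 := lt_min one_pos hδ1
  set c := min 1 δ1
  refine ⟨2 * (18 + 32 * γ ^ 2) / (16 * c ^ 2), by positivity, fun k => ?_⟩
  have hden : c * (1 + k ^ 4) ≤ 1 + γ1 * k ^ 2 + δ1 * k ^ 4 := by
    have h₁ : c ≤ 1 := min_le_left _ _
    have h₂ : c * k ^ 4 ≤ δ1 * k ^ 4 :=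
      mul_le_mul_of_nonneg_right (min_le_right _ _) (by positivity)
    have h₃ : 0 ≤ γ1 * k ^ 2 := by positivity
    linarith
  have hnum : (3 * k - 4 * γ * k ^ 3) ^ 2 * (1 + k ^ 2)
      ≤ 2 * (18 + 32 * γ ^ 2) * (1 + k ^ 4) ^ 2 := by
    have h₁ : (3 * k - 4 * γ * k ^ 3) ^ 2 ≤ (18 + 32 * γ ^ 2) * (k ^ 2 * (1 + k ^ 4)) := by
      have : 0 ≤ γ ^ 2 * k ^ 2 + k ^ 6 := by positivity
      nlinarith [sq_nonneg (3 * k + 4 * γ * k ^ 3)]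
    have h₂ : k ^ 2 * (1 + k ^ 2) ≤ 2 * (1 + k ^ 4) := by nlinarith [sq_nonneg (k ^ 2 - 1)]
    calc
      _ ≤ (18 + 32 * γ ^ 2) * (k ^ 2 * (1 + k ^ 4)) * (1 + k ^ 2) := by gcongr
      _ = (18 + 32 * γ ^ 2) * (1 + k ^ 4) * (k ^ 2 * (1 + k ^ 2)) := by ring
      _ ≤ (18 + 32 * γ ^ 2) * (1 + k ^ 4) * (2 * (1 + k ^ 4)) := by gcongr
      _ = _ := by ring
  rw [← div_eq_mul_inv, div_pow, div_div, div_le_div_iff₀ (by positivity) (by positivity)]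
  have hden₂ : (c * (1 + k ^ 4)) ^ 2 ≤ (1 + γ1 * k ^ 2 + δ1 * k ^ 4) ^ 2 := by gcongr
  calc
    _ = (3 * k - 4 * γ * k ^ 3) ^ 2 * (1 + k ^ 2) * (16 * c ^ 2) := by ring
    _ ≤ 2 * (18 + 32 * γ ^ 2) * (1 + k ^ 4) ^ 2 * (16 * c ^ 2) := by gcongr
    _ = 2 * (18 + 32 * γ ^ 2) * 16 * (c * (1 + k ^ 4)) ^ 2 := by ring
    _ ≤ 2 * (18 + 32 * γ ^ 2) * 16 * (1 + γ1 * k ^ 2 + δ1 * k ^ 4) ^ 2 := by gcongr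
    _ = _ := by ring

/-- **Bilinear estimate for τ(∂ₓ)** (Corollary 2.4): for `γ1, δ1 > 0`, `γ ∈ ℝ` and
every `s ≥ 0` there is `C = C_s > 0` with `‖τ(∂ₓ)(η²)‖_{Hˢ} ≤ C ‖η‖_{Hˢ}²`, where
`τ(k) = (3k − 4γk³)/(4(1 + γ1k² + δ1k⁴))`. -/
theorem tau_bilinear_estimate (γ1 δ1 γ : ℝ) (hγ1 : 0 < γ1) (hδ1 : 0 < δ1)
    (s : ℝ) (hs : 0 ≤ s) :
    ∃ C > 0, ∀ η : ℝ → ℂ, MemHs s η →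
      multHNorm s
        (fun k : ℝ => (((3 * k - 4 * γ * k ^ 3) / (4 * (1 + γ1 * k ^ 2 + δ1 * k ^ 4)) : ℝ) : ℂ))
        (fun x => η x ^ 2) ≤ C * hNorm s η ^ 2 := by
  obtain ⟨A, hA, hτ⟩ := exists_sq_tau_le γ1 δ1 γ hγ1 hδ1
  set J : ℝ := ∫ ξ : ℝ, (1 + (2 * π * ξ) ^ 2)⁻¹
  have hJint : Integrable fun ξ : ℝ => (1 + (2 * π * ξ) ^ 2)⁻¹ :=
    integrable_inv_one_add_sq.comp_mul_left' (by positivity)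
  have hJ : 0 ≤ J := integral_nonneg fun ξ => by positivity
  refine ⟨√(A * 2 ^ s * J) + 1, by positivity, fun η hη => ?_⟩
  have hN : 0 ≤ hNormSq s η := integral_nonneg fun ξ => by positivity
  have hbound : multHNorm s
      (fun k : ℝ => (((3 * k - 4 * γ * k ^ 3) / (4 * (1 + γ1 * k ^ 2 + δ1 * k ^ 4)) : ℝ) : ℂ))
      (fun x => η x ^ 2) ≤ √(A * 2 ^ s * J) * hNormSq s η := by
    rw [multHNorm, ← Real.sqrt_sq hN, ← Real.sqrt_mul (by positivity)]
    refine Real.sqrt_le_sqrt ?_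
    rw [mul_right_comm, ← integral_const_mul]
    refine integral_mono_of_nonneg (ae_of_all _ fun ξ => by positivity) (hJint.const_mul _)
      (ae_of_all _ fun ξ => ?_)
    have h₁ := weight_mul_norm_fourier_sq_le hs hη ξ
    have h₂ := hτ (2 * π * ξ)
    simp only [norm_mul, Complex.norm_real, Real.norm_eq_abs]
    rw [mul_pow |_|, sq_abs]
    calc
      _ = ((3 * (2 * π * ξ) - 4 * γ * (2 * π * ξ) ^ 3) /
            (4 * (1 + γ1 * (2 * π * ξ) ^ 2 + δ1 * (2 * π * ξ) ^ 4))) ^ 2 *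
          ((1 + (2 * π * ξ) ^ 2) ^ s * ‖𝓕 (fun x => η x ^ 2) ξ‖ ^ 2) := by ring
      _ ≤ A * (1 + (2 * π * ξ) ^ 2)⁻¹ * (2 ^ s * hNormSq s η ^ 2) := by gcongr
      _ = _ := by ring
  rw [hNorm, Real.sq_sqrt hN]
  linarith
end
end

section
/- Trilinear estimate: let γ1 > 0 and δ1 > 0 be real constants. For every s ≥ 1/6 there is a constant C = C_s > 0 such that for all η ∈ H^s(ℝ), ‖ψ(∂_x)(η³)‖_{H^s} ≤ C ‖η‖_{H^s}³, where ψ(∂_x) is the Fourier multiplier operator with symbol ψ(ξ) = ξ/(1 + γ1ξ² + δ1ξ⁴). -/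
noncomputable section
open MeasureTheory Real Set
open scoped FourierTransform

open scoped ENNReal Convolution

/-- Hölder-conjugate correlations are continuous. -/
theorem continuous_integral_mul_comp_add {p q : ℝ≥0∞} [Fact (1 ≤ p)] [Fact (1 ≤ q)]
    [p.HolderConjugate q] (hq : q ≠ ∞) {f g : ℝ → ℂ} (hf : MemLp f p) (hg : MemLp g q) :
    Continuous fun t : ℝ => ∫ x, f x * g (t + x) := by
  have : Fact (q ≠ ∞) := ⟨hq⟩
  have h : Continuous fun t : ℝ =>
      (ContinuousLinearMap.mul ℂ ℂ).lpPairing volume p q (hf.toLp f)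
        (DomAddAct.mk t +ᵥ hg.toLp g) := by
    refine ContinuousLinearMap.continuous _ |>.comp ?_
    exact DomAddAct.continuous_mk.vadd continuous_const
  refine h.congr fun t => ?_
  rw [ContinuousLinearMap.lpPairing_eq_integral, DomAddAct.mk_vadd_toLp]
  refine integral_congr_ae ?_
  filter_upwards [hf.coeFn_toLp,
    (hg.comp_measurePreserving (measurePreserving_vadd t volume)).coeFn_toLp] with x h1 h2
  simp only [ContinuousLinearMap.mul_apply', h1]
  exact congrArg _ h2

/-- The Fourier transform of a product is the convolution of the Fourier transforms, as soon as
the convolution integral converges absolutely. -/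
theorem fourier_mul_eq_integral_s6 {p q : ℝ≥0∞} [Fact (1 ≤ p)] [Fact (1 ≤ q)]
    [p.HolderConjugate q] (hq : q ≠ ∞) {f g : ℝ → ℂ} (hf : Integrable f) (hg : Integrable g)
    (hfp : MemLp f p) (hgq : MemLp g q) (ζ : ℝ)
    (hint : Integrable fun ξ => 𝓕 f (ζ - ξ) * 𝓕 g ξ) :
    𝓕 (fun x => f x * g x) ζ = ∫ ξ, 𝓕 f (ζ - ξ) * 𝓕 g ξ := by
  have hcont : Continuous fun x : ℝ => (𝐞 (-(x * ζ)) : ℂ) := by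
    have := Real.continuous_fourierChar
    fun_prop
  have hmod : MemLp (fun x => (𝐞 (-(x * ζ)) : ℂ) * f x) p :=
    hfp.of_le (hcont.aestronglyMeasurable.mul hfp.1)
      (.of_forall fun x => by rw [norm_mul, Circle.norm_coe, one_mul])
  have hmod1 : Integrable (fun x => (𝐞 (-(x * ζ)) : ℂ) * f x) :=
    hf.mono (hcont.aestronglyMeasurable.mul hf.1)
      (.of_forall fun x => by rw [norm_mul, Circle.norm_coe, one_mul])
  have hrefl : Integrable (fun x => (𝐞 (-(-x * ζ)) : ℂ) * f (-x)) := hmod1.comp_neg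
  have hB : ((fun x => (𝐞 (-(-x * ζ)) : ℂ) * f (-x)) ⋆[ContinuousLinearMap.mul ℂ ℂ] g)
      = fun t => ∫ x, ((𝐞 (-(x * ζ)) : ℂ) * f x) * g (t + x) := by
    ext t
    rw [convolution_mul, ← integral_neg_eq_self]
    simp
  have hBint := hrefl.integrable_convolution (ContinuousLinearMap.mul ℂ ℂ) hg
  have hF : 𝓕 ((fun x => (𝐞 (-(-x * ζ)) : ℂ) * f (-x)) ⋆[ContinuousLinearMap.mul ℂ ℂ] g)
      = fun ξ => 𝓕 f (ζ - ξ) * 𝓕 g ξ := by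
    ext ξ
    rw [Real.fourier_mul_convolution_eq hrefl hg]
    congr 1
    rw [Real.fourier_eq', Real.fourier_eq', ← integral_neg_eq_self]
    congr 1
    ext x
    simp only [neg_neg, smul_eq_mul, ← mul_assoc, Real.fourierChar_apply, ← Complex.exp_add]
    congr 2
    simp
    ring
  have hinv := hBint.fourierInv_fourier_eq (v := 0) (by rwa [hF])
    (by rw [hB]; exact (continuous_integral_mul_comp_add hq hmod hgq).continuousAt)
  rw [hF, hB, Real.fourierInv_eq'] at hinv
  simp only [inner_zero_right, mul_zero, Complex.ofReal_zero, zero_mul, Complex.exp_zero, one_smul,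
    zero_add] at hinv
  rw [hinv, Real.fourier_eq]
  congr 1
  ext x
  simp [Circle.smul_def, mul_assoc, mul_comm ζ x]

/-- A trilinear convolution estimate of Schur type. -/
theorem lintegral_trilinear_le {w a : ℝ → ℝ≥0∞} (hw : Measurable w) (ha : Measurable a)
    (hmono : ∀ x y, |x| ≤ |y| → w y ≤ w x) {K : ℝ≥0∞}
    (hK : ∀ z, ∫⁻ x, (if |x| ≤ |z| then w x ^ 2 * w z else 0) ^ 2 ≤ K) (ζ : ℝ) :
    ∫⁻ x, ∫⁻ y, w x * a x * (w y * a y) * (w (ζ - x - y) * a (ζ - x - y)) ≤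
      3 * (K ^ (1 / 2 : ℝ) * (∫⁻ x, a x ^ 2) ^ (3 / 2 : ℝ)) := by
  set A := ∫⁻ x, a x ^ 2
  let k : ℝ → ℝ → ℝ≥0∞ := fun x z => if |x| ≤ |z| then w x ^ 2 * w z else 0
  have hk : Measurable (Function.uncurry k) :=
    Measurable.ite (measurableSet_le (by fun_prop) (by fun_prop)) (by fun_prop) (by fun_prop)
  have hk' {α : Type} [MeasurableSpace α] {u v : α → ℝ} (hu : Measurable u) (hv : Measurable v) :
      Measurable fun p => k (u p) (v p) := hk.comp (hu.prodMk hv)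
  let G₁ : ℝ → ℝ → ℝ≥0∞ := fun x y => a x * a y * (a (ζ - x - y) * k x (ζ - x - y))
  let G₂ : ℝ → ℝ → ℝ≥0∞ := fun x y => a x * a y * (a (ζ - x - y) * k y (ζ - x - y))
  let G₃ : ℝ → ℝ → ℝ≥0∞ := fun x y => a x * a y * (a (ζ - x - y) * k (ζ - x - y) y)
  have hG₁ : Measurable (Function.uncurry G₁) := by
    have : Measurable fun p : ℝ × ℝ => k p.1 (ζ - p.1 - p.2) := hk' (by fun_prop) (by fun_prop)
    change Measurable fun p : ℝ × ℝ =>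
      a p.1 * a p.2 * (a (ζ - p.1 - p.2) * k p.1 (ζ - p.1 - p.2))
    fun_prop
  have hG₂ : Measurable (Function.uncurry G₂) := by
    have : Measurable fun p : ℝ × ℝ => k p.2 (ζ - p.1 - p.2) := hk' (by fun_prop) (by fun_prop)
    change Measurable fun p : ℝ × ℝ =>
      a p.1 * a p.2 * (a (ζ - p.1 - p.2) * k p.2 (ζ - p.1 - p.2))
    fun_prop
  have hG₃ : Measurable (Function.uncurry G₃) := by
    have : Measurable fun p : ℝ × ℝ => k (ζ - p.1 - p.2) p.2 := hk' (by fun_prop) (by fun_prop)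
    change Measurable fun p : ℝ × ℝ =>
      a p.1 * a p.2 * (a (ζ - p.1 - p.2) * k (ζ - p.1 - p.2) p.2)
    fun_prop
  have hpt : ∀ x y, w x * a x * (w y * a y) * (w (ζ - x - y) * a (ζ - x - y)) ≤
      G₁ x y + G₂ x y + G₃ x y := by
    intro x y
    set z := ζ - x - y with hz
    have hle {u v t : ℝ} (h : |u| ≤ |v|) (h' : |u| ≤ |t|) : w u * w v * w t ≤ k u t := by
      simp only [k, h', if_true, sq]
      gcongr
      exact hmono _ _ h
    have key : w x * w y * w z ≤ k x z + k y z + k z y := by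
      rcases le_total |x| |y| with h | h <;> rcases le_total |y| |z| with h' | h' <;>
        rcases le_total |x| |z| with h'' | h''
      · exact (hle h h'').trans (by rw [add_assoc]; exact le_self_add)
      · exact (hle h (h.trans h')).trans (by rw [add_assoc]; exact le_self_add)
      · exact (hle h h'').trans (by rw [add_assoc]; exact le_self_add)
      · exact (by ring : w x * w y * w z = w z * w x * w y).trans_le
          ((hle h'' h').trans le_add_self)
      · exact (by ring : w x * w y * w z = w y * w x * w z).trans_le
          ((hle h h').trans (le_add_self.trans le_self_add))
      · exact (by ring : w x * w y * w z = w y * w x * w z).trans_le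
          ((hle h h').trans (le_add_self.trans le_self_add))
      · exact (by ring : w x * w y * w z = w z * w x * w y).trans_le
          ((hle (h'.trans h) h').trans le_add_self)
      · exact (by ring : w x * w y * w z = w z * w x * w y).trans_le
          ((hle h'' h').trans le_add_self)
    calc w x * a x * (w y * a y) * (w z * a z) = a x * a y * a z * (w x * w y * w z) := by ring
      _ ≤ a x * a y * a z * (k x z + k y z + k z y) := by gcongr
      _ = _ := by simp only [G₁, G₂, G₃, ← hz]; ring
  have h₁ : ∫⁻ x, ∫⁻ y, G₁ x y ≤ K ^ (1 / 2 : ℝ) * A ^ (3 / 2 : ℝ) := by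
    have hm₁ : Measurable fun p : ℝ × ℝ => a p.1 * a p.2 := by fun_prop
    have hm₂ : Measurable fun p : ℝ × ℝ => a (ζ - p.1 - p.2) * k p.1 (ζ - p.1 - p.2) := by
      have : Measurable fun p : ℝ × ℝ => k p.1 (ζ - p.1 - p.2) := hk' (by fun_prop) (by fun_prop)
      fun_prop
    have hL : ∫⁻ p : ℝ × ℝ, (a p.1 * a p.2) ^ 2 = A * A := by
      simp_rw [mul_pow]
      exact lintegral_prod_mul (ha.pow_const 2).aemeasurable (ha.pow_const 2).aemeasurable
    have hR : ∫⁻ p : ℝ × ℝ, (a (ζ - p.1 - p.2) * k p.1 (ζ - p.1 - p.2)) ^ 2 ≤ A * K := by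
      rw [Measure.volume_eq_prod, lintegral_prod _ (hm₂.pow_const 2).aemeasurable]
      calc ∫⁻ x, ∫⁻ y, (a (ζ - x - y) * k x (ζ - x - y)) ^ 2
          = ∫⁻ x, ∫⁻ z, (a z * k x z) ^ 2 :=
            lintegral_congr fun x =>
              lintegral_sub_left_eq_self (fun z => (a z * k x z) ^ 2) (ζ - x)
        _ = ∫⁻ z, ∫⁻ x, (a z * k x z) ^ 2 := by
            refine lintegral_lintegral_swap ?_
            have : Measurable fun p : ℝ × ℝ => k p.1 p.2 := hk
            change AEMeasurable fun p : ℝ × ℝ => (a p.2 * k p.1 p.2) ^ 2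
            fun_prop
        _ ≤ ∫⁻ z, a z ^ 2 * K := by
            refine lintegral_mono fun z => ?_
            simp_rw [mul_pow]
            have : Measurable fun x => k x z := hk' measurable_id measurable_const
            rw [lintegral_const_mul _ (this.pow_const 2)]
            gcongr
            exact hK z
        _ = A * K := lintegral_mul_const _ (by fun_prop)
    calc ∫⁻ x, ∫⁻ y, G₁ x y
        = ∫⁻ p : ℝ × ℝ, (a p.1 * a p.2) * (a (ζ - p.1 - p.2) * k p.1 (ζ - p.1 - p.2)) :=
          (lintegral_prod _ hG₁.aemeasurable).symm
      _ ≤ (∫⁻ p : ℝ × ℝ, (a p.1 * a p.2) ^ (2 : ℝ)) ^ (1 / 2 : ℝ) *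
          (∫⁻ p : ℝ × ℝ, (a (ζ - p.1 - p.2) * k p.1 (ζ - p.1 - p.2)) ^ (2 : ℝ)) ^ (1 / 2 : ℝ) :=
          ENNReal.lintegral_mul_le_Lp_mul_Lq _ .two_two hm₁.aemeasurable hm₂.aemeasurable
      _ ≤ (A * A) ^ (1 / 2 : ℝ) * (A * K) ^ (1 / 2 : ℝ) := by
          simp only [ENNReal.rpow_two]
          rw [hL]
          gcongr
      _ = K ^ (1 / 2 : ℝ) * A ^ (3 / 2 : ℝ) := by
          rw [← ENNReal.mul_rpow_of_nonneg _ _ (by norm_num), (by ring : A * A * (A * K) = K * A ^ 3),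
            ENNReal.mul_rpow_of_nonneg _ _ (by norm_num), ← ENNReal.rpow_natCast,
            ← ENNReal.rpow_mul]
          norm_num
  have h₂ : ∫⁻ x, ∫⁻ y, G₂ x y = ∫⁻ x, ∫⁻ y, G₁ x y := by
    rw [lintegral_lintegral_swap hG₂.aemeasurable]
    refine lintegral_congr fun y => lintegral_congr fun x => ?_
    simp only [G₁, G₂, sub_right_comm ζ x y, mul_comm (a x)]
  have h₃ : ∫⁻ x, ∫⁻ y, G₃ x y = ∫⁻ x, ∫⁻ y, G₂ x y := by
    refine lintegral_congr fun x => ?_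
    rw [← lintegral_sub_left_eq_self (G₃ x) (ζ - x)]
    refine lintegral_congr fun y => ?_
    simp only [G₂, G₃, sub_sub_cancel]
    ring
  calc _ ≤ ∫⁻ x, ∫⁻ y, (G₁ x y + G₂ x y + G₃ x y) :=
        lintegral_mono fun x => lintegral_mono fun y => hpt x y
    _ = (∫⁻ x, ∫⁻ y, G₁ x y) + (∫⁻ x, ∫⁻ y, G₂ x y) + ∫⁻ x, ∫⁻ y, G₃ x y := by
        have m₁ : Measurable fun x => ∫⁻ y, G₁ x y := hG₁.lintegral_prod_right'
        have m₂ : Measurable fun x => ∫⁻ y, G₂ x y := hG₂.lintegral_prod_right'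
        rw [← lintegral_add_left m₁, ← lintegral_add_left (by fun_prop)]
        refine lintegral_congr fun x => ?_
        have n₁ : Measurable (G₁ x) := hG₁.of_uncurry_left
        have n₂ : Measurable (G₂ x) := hG₂.of_uncurry_left
        rw [lintegral_add_left (by fun_prop), lintegral_add_left n₁]
    _ ≤ _ := by
        rw [h₃, h₂, ← two_add_one_eq_three, add_mul, two_mul, one_mul]
        gcongr

/-- The squared Japanese bracket `⟨2πξ⟩² = 1 + (2πξ)²`. -/
def japSq (ξ : ℝ) : ℝ := 1 + (2 * π * ξ) ^ 2

theorem one_le_japSq (ξ : ℝ) : 1 ≤ japSq ξ := le_add_of_nonneg_right (sq_nonneg _)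

theorem japSq_pos (ξ : ℝ) : 0 < japSq ξ := one_pos.trans_le (one_le_japSq ξ)

theorem continuous_japSq : Continuous japSq := by
  unfold japSq
  fun_prop

theorem measurable_japSq_rpow (t : ℝ) : Measurable fun ξ => japSq ξ ^ t :=
  continuous_japSq.measurable.pow_const t

theorem japSq_add_le (x y : ℝ) : japSq (x + y) ≤ 2 * (japSq x * japSq y) := by
  unfold japSq
  nlinarith [sq_nonneg (2 * π * x - 2 * π * y), sq_nonneg (2 * π * x * (2 * π * y))]

theorem lintegral_comp_abs (f : ℝ → ℝ≥0∞) :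
    ∫⁻ x, f |x| = 2 * ∫⁻ x in Ioi 0, f x := by
  have h₁ : ∫⁻ x in Ioi 0, f |x| = ∫⁻ x in Ioi 0, f x :=
    setLIntegral_congr_fun measurableSet_Ioi fun x hx => by rw [abs_of_pos hx]
  have h₂ : ∫⁻ x in Iio 0, f |x| = ∫⁻ x in Ioi 0, f x := by
    rw [← h₁, ← (Measure.measurePreserving_neg volume).setLIntegral_comp_preimage_emb
      (MeasurableEquiv.neg ℝ).measurableEmbedding]
    simp
  rw [← lintegral_add_compl _ (measurableSet_Ioi (a := (0 : ℝ))), compl_Ioi,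
    ← restrict_Iio_eq_restrict_Iic, h₁, h₂, two_mul]

/-- The Schur-type bound for the weight `⟨2πx⟩^(-1/6)`. -/
theorem lintegral_weight_sq_le (z : ℝ) :
    ∫⁻ x : ℝ, (if |x| ≤ |z| then ENNReal.ofReal (japSq x ^ (-(1 / 12) : ℝ)) ^ 2 *
      ENNReal.ofReal (japSq z ^ (-(1 / 12) : ℝ)) else 0) ^ 2 ≤ 6 := by
  let φ : ℝ → ℝ≥0∞ := (Iic |z|).indicator fun t =>
    ENNReal.ofReal (t ^ (-(2 / 3) : ℝ)) * ENNReal.ofReal (|z| ^ (-(1 / 3) : ℝ))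
  have hw {x : ℝ} (hx : x ≠ 0) :
      japSq x ^ (-(1 / 12) : ℝ) ≤ |x| ^ (-(1 / 6) : ℝ) := by
    have hx' : 0 < |x| := abs_pos.2 hx
    calc japSq x ^ (-(1 / 12) : ℝ) ≤ (|x| ^ 2) ^ (-(1 / 12) : ℝ) := by
          refine rpow_le_rpow_of_nonpos (by positivity) ?_ (by norm_num)
          rw [sq_abs, japSq, mul_pow]
          have : 1 ≤ (2 * π) ^ 2 := by nlinarith [pi_gt_three]
          nlinarith [sq_nonneg x]
      _ = |x| ^ (-(1 / 6) : ℝ) := by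
          rw [← rpow_natCast, ← rpow_mul hx'.le]
          norm_num
  have hle : ∀ᵐ x : ℝ, (if |x| ≤ |z| then
      ENNReal.ofReal (japSq x ^ (-(1 / 12) : ℝ)) ^ 2 *
      ENNReal.ofReal (japSq z ^ (-(1 / 12) : ℝ)) else 0) ^ 2 ≤ φ |x| := by
    filter_upwards [Measure.ae_ne volume (0 : ℝ)] with x hx
    split_ifs with h
    · have hz : z ≠ 0 := by
        rintro rfl
        exact hx (by simpa using h)
      simp only [φ]
      rw [indicator_of_mem (mem_Iic.2 h), mul_pow]
      have e₁ : |x| ^ (-(2 / 3) : ℝ) = ((|x| ^ (-(1 / 6) : ℝ)) ^ 2) ^ 2 := by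
        rw [← pow_mul, ← rpow_natCast, ← rpow_mul (abs_nonneg x)]
        norm_num
      have e₂ : |z| ^ (-(1 / 3) : ℝ) = (|z| ^ (-(1 / 6) : ℝ)) ^ 2 := by
        rw [← rpow_natCast, ← rpow_mul (abs_nonneg z)]
        norm_num
      rw [e₁, e₂, ENNReal.ofReal_pow (by positivity), ENNReal.ofReal_pow (by positivity),
        ENNReal.ofReal_pow (by positivity)]
      gcongr
      · exact hw hx
      · exact hw hz
    · simp
  refine (lintegral_mono_ae hle).trans ?_
  rw [lintegral_comp_abs, setLIntegral_indicator measurableSet_Iic, inter_comm, Ioi_inter_Iic,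
    lintegral_mul_const _ (by fun_prop)]
  have hint : IntegrableOn (fun t : ℝ => t ^ (-(2 / 3) : ℝ)) (Ioc 0 |z|) :=
    (intervalIntegral.intervalIntegrable_rpow' (by norm_num)).1
  have hval : ∫⁻ t in Ioc 0 |z|, ENNReal.ofReal (t ^ (-(2 / 3) : ℝ)) =
      ENNReal.ofReal (3 * |z| ^ (1 / 3 : ℝ)) := by
    rw [← ofReal_integral_eq_lintegral_ofReal hint
      ((ae_restrict_mem measurableSet_Ioc).mono fun t ht => rpow_nonneg ht.1.le _),
      ← intervalIntegral.integral_of_le (abs_nonneg z), integral_rpow (Or.inl (by norm_num))]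
    congr 1
    norm_num
    ring
  rw [hval, ← ENNReal.ofReal_mul (by positivity), mul_assoc]
  have : |z| ^ (1 / 3 : ℝ) * |z| ^ (-(1 / 3) : ℝ) ≤ 1 := by
    rcases eq_or_ne z 0 with rfl | hz
    · norm_num
    · rw [← rpow_add (abs_pos.2 hz)]
      norm_num
  calc 2 * ENNReal.ofReal (3 * (|z| ^ (1 / 3 : ℝ) * |z| ^ (-(1 / 3) : ℝ)))
      ≤ 2 * ENNReal.ofReal (3 * 1) := by gcongr
    _ = 6 := by
        rw [mul_one, ENNReal.ofReal_ofNat]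
        norm_num

/-- Pointwise control of the Fourier transform of a cube. -/
theorem japSq_rpow_mul_norm_fourier_cube_le {s r : ℝ} (hs : 1 / 6 ≤ s) (hr : 0 ≤ r)
    (hrs : r ≤ s - 1 / 6) {η : ℝ → ℂ} (hη : MemHs s η) (hη₃ : Integrable fun x => η x ^ 3)
    (ζ : ℝ) :
    japSq ζ ^ (r / 2) * ‖𝓕 (fun x => η x ^ 3) ζ‖ ≤
      4 ^ (r / 2) * (3 * (6 ^ (1 / 2 : ℝ) * hNorm s η ^ 3)) := by
  obtain ⟨hη₁, hηs⟩ := hη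
  have hm := hη₁.aestronglyMeasurable
  have hn₃ : Integrable fun x => ‖η x‖ ^ 3 := by simpa using hη₃.norm
  have hn₂ : Integrable fun x => ‖η x‖ ^ 2 := by
    refine (hη₁.norm.add hn₃).mono' (hm.norm.pow 2) (.of_forall fun x => ?_)
    rw [Real.norm_of_nonneg (by positivity), Pi.add_apply]
    nlinarith [norm_nonneg (η x), mul_nonneg (norm_nonneg (η x)) (sq_nonneg (‖η x‖ - 1))]
  have hL₂ : MemLp η 2 := (memLp_two_iff_integrable_sq_norm hm).2 hn₂
  have hL₃ : MemLp η 3 := by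
    refine (integrable_norm_rpow_iff hm (by norm_num) (by norm_num)).1 ?_
    simpa using hn₃
  have hη₂ : Integrable fun x => η x * η x := hL₂.integrable_mul hL₂
  have hL₃₂ : MemLp (fun x => η x * η x) (3 / 2) := by
    refine (integrable_norm_rpow_iff (hm.mul hm) (by simp) (by finiteness)).1 ?_
    refine hn₃.congr (.of_forall fun x => ?_)
    change ‖η x‖ ^ 3 = ‖η x * η x‖ ^ (3 / 2 : ℝ≥0∞).toReal
    rw [norm_mul, ← sq, ← rpow_natCast, ← rpow_natCast, ← rpow_mul (norm_nonneg _)]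
    norm_num
  set h := 𝓕 η
  have hcont {f : ℝ → ℂ} (hf : Integrable f) : Continuous (𝓕 f) :=
    VectorFourier.fourierIntegral_continuous Real.continuous_fourierChar (by fun_prop) hf
  have hc : Continuous h := hcont hη₁
  have hhL₂ : MemLp h 2 := by
    refine (memLp_two_iff_integrable_sq_norm hc.aestronglyMeasurable).2 ?_
    refine hηs.mono' (by fun_prop) (.of_forall fun ξ => ?_)
    rw [Real.norm_of_nonneg (by positivity)]
    exact le_mul_of_one_le_left (by positivity) (one_le_rpow (one_le_japSq ξ) (by linarith))
  have hhL₂' (ζ : ℝ) : MemLp (fun ξ => h (ζ - ξ)) 2 :=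
    hhL₂.comp_measurePreserving (Measure.measurePreserving_sub_left volume ζ)
  have hsq (ζ : ℝ) : 𝓕 (fun x => η x * η x) ζ = ∫ ξ, h (ζ - ξ) * h ξ :=
    fourier_mul_eq_integral_s6 (p := 2) (q := 2) (by simp) hη₁ hη₁ hL₂ hL₂ ζ
      ((hhL₂' ζ).integrable_mul hhL₂)
  let w : ℝ → ℝ≥0∞ := fun x => ENNReal.ofReal (japSq x ^ (-(1 / 12) : ℝ))
  let a : ℝ → ℝ≥0∞ := fun x => ENNReal.ofReal (japSq x ^ (s / 2) * ‖h x‖)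
  have hw : Measurable w := (measurable_japSq_rpow _).ennreal_ofReal
  have ha : Measurable a :=
    ((measurable_japSq_rpow _).mul hc.norm.measurable).ennreal_ofReal
  have ha₂ : ∫⁻ x, a x ^ 2 = ENNReal.ofReal (hNormSq s η) := by
    rw [hNormSq, ofReal_integral_eq_lintegral_ofReal hηs (.of_forall fun ξ => by positivity)]
    refine lintegral_congr fun x => ?_
    have hx := japSq_pos x
    simp only [a]
    rw [← ENNReal.ofReal_pow (by positivity), mul_pow, ← rpow_natCast, ← rpow_mul hx.le]
    norm_num
    rfl
  have hnonneg : 0 ≤ hNormSq s η := integral_nonneg fun ξ => by positivity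
  have hcube : hNormSq s η ^ (3 / 2 : ℝ) = hNorm s η ^ 3 := by
    rw [hNorm, sqrt_eq_rpow, ← rpow_natCast, ← rpow_mul hnonneg]
    norm_num
  set M := 4 ^ (r / 2) * (3 * (6 ^ (1 / 2 : ℝ) * hNorm s η ^ 3))
  set L := ∫⁻ x, ∫⁻ y, ‖h x‖ₑ * ‖h y‖ₑ * ‖h (ζ - x - y)‖ₑ
  have hpt (x : ℝ) : ENNReal.ofReal (japSq x ^ (r / 2)) * ‖h x‖ₑ ≤ w x * a x := by
    have hx := japSq_pos x
    simp only [w, a]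
    rw [← ofReal_norm, ← ENNReal.ofReal_mul (by positivity),
      ← ENNReal.ofReal_mul (by positivity), ← mul_assoc, ← rpow_add hx]
    gcongr
    · exact one_le_japSq x
    · linarith
  have hLM : ENNReal.ofReal (japSq ζ ^ (r / 2)) * L ≤ ENNReal.ofReal M := by
    calc ENNReal.ofReal (japSq ζ ^ (r / 2)) * L
        = ∫⁻ x, ∫⁻ y, ENNReal.ofReal (japSq ζ ^ (r / 2)) *
            (‖h x‖ₑ * ‖h y‖ₑ * ‖h (ζ - x - y)‖ₑ) := by
          simp_rw [lintegral_const_mul' _ _ ENNReal.ofReal_ne_top]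
          rfl
      _ ≤ ∫⁻ x, ∫⁻ y, ENNReal.ofReal (4 ^ (r / 2)) *
            (w x * a x * (w y * a y) * (w (ζ - x - y) * a (ζ - x - y))) := by
          refine lintegral_mono fun x => lintegral_mono fun y => ?_
          have hx := japSq_pos x
          have hy := japSq_pos y
          have hz := japSq_pos (ζ - x - y)
          have hJ : japSq ζ ≤ 4 * (japSq x * japSq y * japSq (ζ - x - y)) := by
            have h₁ := japSq_add_le x (y + (ζ - x - y))
            have h₂ := japSq_add_le y (ζ - x - y)
            rw [(by ring : x + (y + (ζ - x - y)) = ζ)] at h₁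
            nlinarith
          have hJr : japSq ζ ^ (r / 2) ≤ 4 ^ (r / 2) *
              (japSq x ^ (r / 2) * japSq y ^ (r / 2) * japSq (ζ - x - y) ^ (r / 2)) := by
            rw [← mul_rpow hx.le hy.le, ← mul_rpow (by positivity) hz.le,
              ← mul_rpow (by norm_num) (by positivity)]
            exact rpow_le_rpow (japSq_pos ζ).le hJ (by positivity)
          calc ENNReal.ofReal (japSq ζ ^ (r / 2)) * (‖h x‖ₑ * ‖h y‖ₑ * ‖h (ζ - x - y)‖ₑ)
              ≤ ENNReal.ofReal (4 ^ (r / 2) *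
                (japSq x ^ (r / 2) * japSq y ^ (r / 2) * japSq (ζ - x - y) ^ (r / 2))) *
                (‖h x‖ₑ * ‖h y‖ₑ * ‖h (ζ - x - y)‖ₑ) := by gcongr
            _ = ENNReal.ofReal (4 ^ (r / 2)) *
                ((ENNReal.ofReal (japSq x ^ (r / 2)) * ‖h x‖ₑ) *
                  (ENNReal.ofReal (japSq y ^ (r / 2)) * ‖h y‖ₑ) *
                  (ENNReal.ofReal (japSq (ζ - x - y) ^ (r / 2)) * ‖h (ζ - x - y)‖ₑ)) := by
                rw [ENNReal.ofReal_mul (by positivity), ENNReal.ofReal_mul (by positivity),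
                  ENNReal.ofReal_mul (by positivity)]
                ring
            _ ≤ _ := mul_le_mul' le_rfl (mul_le_mul' (mul_le_mul' (hpt x) (hpt y)) (hpt _))
      _ = ENNReal.ofReal (4 ^ (r / 2)) *
            ∫⁻ x, ∫⁻ y, w x * a x * (w y * a y) * (w (ζ - x - y) * a (ζ - x - y)) := by
          simp_rw [lintegral_const_mul' _ _ ENNReal.ofReal_ne_top]
      _ ≤ ENNReal.ofReal (4 ^ (r / 2)) *
            (3 * (6 ^ (1 / 2 : ℝ) * (∫⁻ x, a x ^ 2) ^ (3 / 2 : ℝ))) := by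
          gcongr
          refine lintegral_trilinear_le hw ha (fun x y hxy => ?_) lintegral_weight_sq_le ζ
          refine ENNReal.ofReal_le_ofReal (rpow_le_rpow_of_nonpos (japSq_pos x) ?_ (by norm_num))
          simp only [japSq, mul_pow]
          have := sq_le_sq.2 hxy
          gcongr
      _ = ENNReal.ofReal M := by
          rw [ha₂, ENNReal.ofReal_rpow_of_nonneg hnonneg (by norm_num), hcube,
            ← ENNReal.ofReal_ofNat 6, ENNReal.ofReal_rpow_of_nonneg (by norm_num) (by norm_num),
            ← ENNReal.ofReal_ofNat 3, ← ENNReal.ofReal_mul (by positivity),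
            ← ENNReal.ofReal_mul (by positivity), ← ENNReal.ofReal_mul (by positivity)]
  have hJpos : 0 < japSq ζ ^ (r / 2) := rpow_pos_of_pos (japSq_pos ζ) _
  have hLtop : L < ∞ := by
    by_contra hcon
    rw [not_lt_top_iff.1 hcon, ENNReal.mul_top (by simpa using hJpos)] at hLM
    exact ENNReal.ofReal_ne_top (top_le_iff.1 hLM)
  have hqL : ∫⁻ ξ, ‖𝓕 (fun x => η x * η x) (ζ - ξ) * h ξ‖ₑ ≤ L := by
    refine lintegral_mono fun x => ?_
    simp only
    rw [hsq, enorm_mul]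
    calc ‖∫ y, h (ζ - x - y) * h y‖ₑ * ‖h x‖ₑ
        ≤ (∫⁻ y, ‖h (ζ - x - y) * h y‖ₑ) * ‖h x‖ₑ := by
          gcongr
          exact enorm_integral_le_lintegral_enorm _
      _ = ∫⁻ y, ‖h x‖ₑ * ‖h y‖ₑ * ‖h (ζ - x - y)‖ₑ := by
          rw [← lintegral_mul_const' _ _ enorm_ne_top]
          refine lintegral_congr fun y => ?_
          rw [enorm_mul]
          ring
  have hqint : Integrable fun ξ => 𝓕 (fun x => η x * η x) (ζ - ξ) * h ξ := by
    refine ⟨Continuous.aestronglyMeasurable ?_, hqL.trans_lt hLtop⟩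
    have := hcont hη₂
    fun_prop
  have : Fact ((1 : ℝ≥0∞) ≤ 3 / 2) := ⟨by
    rw [ENNReal.le_div_iff_mul_le (by simp) (by simp)]
    norm_num⟩
  have : Fact ((1 : ℝ≥0∞) ≤ 3) := ⟨by norm_num⟩
  have : ENNReal.HolderConjugate (3 / 2) 3 := ⟨by
    rw [ENNReal.inv_div (by simp) (by simp), inv_one, ← one_div, ENNReal.div_add_div_same,
      two_add_one_eq_three, ENNReal.div_self (by simp) (by simp)]⟩
  have hF := fourier_mul_eq_integral_s6 (p := 3 / 2) (q := 3) (by simp) hη₂ hη₁ hL₃₂ hL₃ ζ hqint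
  have hfin : ENNReal.ofReal (japSq ζ ^ (r / 2) * ‖𝓕 (fun x => η x ^ 3) ζ‖) ≤
      ENNReal.ofReal M := by
    rw [ENNReal.ofReal_mul hJpos.le, ofReal_norm]
    refine le_trans ?_ hLM
    gcongr
    rw [(by ext x; ring : (fun x => η x ^ 3) = fun x => η x * η x * η x), hF]
    exact (enorm_integral_le_lintegral_enorm _).trans hqL
  have hM₀ : 0 ≤ M := by
    have : 0 ≤ hNorm s η := sqrt_nonneg _
    positivity
  exact (ENNReal.ofReal_le_ofReal_iff hM₀).1 hfin

/-- Decay of the symbol `ψ`. -/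
theorem symbol_sq_le {γ δ : ℝ} (hγ : 0 < γ) (hδ : 0 < δ) :
    ∃ c > 0, ∀ k : ℝ, (k / (1 + γ * k ^ 2 + δ * k ^ 4)) ^ 2 ≤ c * ((1 + k ^ 2) ^ 3)⁻¹ := by
  obtain ⟨m, hm, hm₁, hmγ, hmδ⟩ : ∃ m : ℝ, 0 < m ∧ m ≤ 1 ∧ m ≤ γ ∧ m ≤ δ :=
    ⟨min 1 (min γ δ), by positivity, by simp, by simp, by simp⟩
  refine ⟨4 / m ^ 2, by positivity, fun k => ?_⟩
  have hden : m / 2 * (1 + k ^ 2) ^ 2 ≤ 1 + γ * k ^ 2 + δ * k ^ 4 := by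
    have h₁ : m * k ^ 2 ≤ γ * k ^ 2 := by gcongr
    have h₂ : m * k ^ 4 ≤ δ * k ^ 4 := by gcongr
    nlinarith [mul_nonneg hm.le (sq_nonneg (k ^ 2))]
  calc (k / (1 + γ * k ^ 2 + δ * k ^ 4)) ^ 2 = k ^ 2 / (1 + γ * k ^ 2 + δ * k ^ 4) ^ 2 := by
        rw [div_pow]
    _ ≤ (1 + k ^ 2) / (m / 2 * (1 + k ^ 2) ^ 2) ^ 2 := by
        gcongr
        linarith
    _ = 4 / m ^ 2 * ((1 + k ^ 2) ^ 3)⁻¹ := by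
        field_simp
        norm_num

/-- **Trilinear estimate** (Proposition 2.5): for `γ1, δ1 > 0` and every `s ≥ 1/6`
there is `C = C_s > 0` with `‖ψ(∂ₓ)(η³)‖_{Hˢ} ≤ C ‖η‖_{Hˢ}³`, where
`ψ(k) = k/(1 + γ1k² + δ1k⁴)`. -/
theorem psi_trilinear_estimate (γ1 δ1 : ℝ) (hγ1 : 0 < γ1) (hδ1 : 0 < δ1)
    (s : ℝ) (hs : 1 / 6 ≤ s) :
    ∃ C > 0, ∀ η : ℝ → ℂ, MemHs s η →
      multHNorm s (fun k : ℝ => ((k / (1 + γ1 * k ^ 2 + δ1 * k ^ 4) : ℝ) : ℂ))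
        (fun x => η x ^ 3) ≤ C * hNorm s η ^ 3 := by
  obtain ⟨c, hc, hψ⟩ := symbol_sq_le hγ1 hδ1
  obtain ⟨r, hr, hrs, hsr⟩ : ∃ r : ℝ, 0 ≤ r ∧ r ≤ s - 1 / 6 ∧ s ≤ r + 2 :=
    ⟨max (s - 2) 0, le_max_right _ _, max_le (by linarith) (by linarith),
      by linarith [le_max_left (s - 2) 0]⟩
  have hint : Integrable fun ξ => (japSq ξ)⁻¹ :=
    integrable_inv_one_add_sq.comp_mul_left' (by positivity : 2 * π ≠ 0)
  set I := ∫ ξ, (japSq ξ)⁻¹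
  have hI : 0 ≤ I := integral_nonneg fun ξ => inv_nonneg.2 (japSq_pos ξ).le
  set D : ℝ := 4 ^ (r / 2) * (3 * 6 ^ (1 / 2 : ℝ)) with hD
  have hD₀ : 0 ≤ D := by positivity
  refine ⟨√(c * I) * D + 1, by positivity, fun η hη => ?_⟩
  have hN : 0 ≤ hNorm s η := sqrt_nonneg _
  by_cases hη₃ : Integrable fun x => η x ^ 3
  · set N := hNorm s η ^ 3 with hNdef
    have hN₃ : 0 ≤ N := by positivity
    have hpt (ξ : ℝ) : (1 + (2 * π * ξ) ^ 2) ^ s *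
        ‖((2 * π * ξ / (1 + γ1 * (2 * π * ξ) ^ 2 + δ1 * (2 * π * ξ) ^ 4) : ℝ) : ℂ) *
          𝓕 (fun x => η x ^ 3) ξ‖ ^ 2 ≤ c * (D * N) ^ 2 * (japSq ξ)⁻¹ := by
      have hJ := japSq_pos ξ
      have hF := japSq_rpow_mul_norm_fourier_cube_le hs hr hrs hη hη₃ ξ
      have hF₂ : japSq ξ ^ r * ‖𝓕 (fun x => η x ^ 3) ξ‖ ^ 2 ≤ (D * N) ^ 2 := by
        calc _ = (japSq ξ ^ (r / 2) * ‖𝓕 (fun x => η x ^ 3) ξ‖) ^ 2 := by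
              rw [mul_pow, ← rpow_mul_natCast hJ.le]
              norm_num
          _ ≤ (D * N) ^ 2 := by
              refine pow_le_pow_left₀ (by positivity) (hF.trans (le_of_eq ?_)) 2
              rw [hD, hNdef]
              ring
      rw [norm_mul, Complex.norm_real, Real.norm_eq_abs, mul_pow |_|, sq_abs]
      calc _ ≤ japSq ξ ^ s * (c * (japSq ξ ^ 3)⁻¹ * ‖𝓕 (fun x => η x ^ 3) ξ‖ ^ 2) := by
            gcongr
            · exact le_rfl
            · exact hψ _
        _ ≤ japSq ξ ^ (r + 2) * (c * (japSq ξ ^ 3)⁻¹ * ‖𝓕 (fun x => η x ^ 3) ξ‖ ^ 2) := by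
            gcongr
            exact one_le_japSq ξ
        _ = c * (japSq ξ ^ r * ‖𝓕 (fun x => η x ^ 3) ξ‖ ^ 2) * (japSq ξ)⁻¹ := by
            rw [rpow_add hJ, rpow_two]
            field_simp
        _ ≤ c * (D * N) ^ 2 * (japSq ξ)⁻¹ := by gcongr
    have hle := integral_mono_of_nonneg (μ := volume)
      (.of_forall fun ξ => by positivity) (hint.const_mul (c * (D * N) ^ 2)) (.of_forall hpt)
    rw [integral_const_mul] at hle
    calc _ ≤ √(c * (D * N) ^ 2 * I) := sqrt_le_sqrt hle
      _ = √(c * I) * (D * N) := by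
          rw [(by ring : c * (D * N) ^ 2 * I = c * I * (D * N) ^ 2), sqrt_mul (by positivity),
            sqrt_sq (by positivity)]
      _ ≤ (√(c * I) * D + 1) * N := by linarith
  · have h0 : 𝓕 (fun x => η x ^ 3) = 0 := by
      ext ξ
      rw [Real.fourier_eq]
      exact integral_undef (by rwa [Real.fourierIntegral_convergent_iff])
    rw [multHNorm, h0]
    simp only [Pi.zero_apply, mul_zero, norm_zero, ne_eq, OfNat.ofNat_ne_zero, not_false_eq_true,
      zero_pow, integral_zero, sqrt_zero]
    positivity
end
end

section
/- Energy identity: let γ1 > 0, δ1 > 0, γ2, δ2, γ be real constants and let η : ℝ × [0,T] → ℝ be a smooth solution of the fifth-order KdV–BBM equation such that x ↦ η(x,t) is a Schwartz function for each t and t ↦ η(·,t) is smooth into the Schwartz space. Then for every t ∈ [0,T], (d/dt) (1/2) ∫_ℝ ( η² + γ1 η_x² + δ1 η_xx² ) dx = (γ − 7/48) ∫_ℝ η_x³ dx. -/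
/-!
STATEMENT 10 (energy identity, equation (apriori1) of the paper): if `η` is a
smooth solution on `ℝ × [0,T]` of the fifth-order KdV–BBM equation
`η_t + η_x − γ1 η_{xxt} + γ2 η_{xxx} + δ1 η_{xxxxt} + δ2 η_{xxxxx}
  + (3/4)(η²)_x + γ(η²)_{xxx} − (7/48)(η_x²)_x − (1/8)(η³)_x = 0`,
Schwartz in `x` for each `t` and smooth in `t` into the Schwartz space, then
`(d/dt)(1/2)∫(η² + γ1 η_x² + δ1 η_{xx}²)dx = (γ − 7/48) ∫ η_x³ dx`.

The solution is formalized as a curve `η : ℝ → 𝓢(ℝ,ℝ)` of Schwartz functions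
(`η t` is the profile `x ↦ η(x,t)`); smoothness in time into the Schwartz space is
encoded by a sequence `D n` of time-derivative curves, `D 0 = η`, where `D (n+1) t`
is the derivative (within `[0,T]`) of `D n` at `t` in the topology of `𝓢(ℝ,ℝ)`.
In particular `D 1 t = η_t(·,t)`.
-/

noncomputable section
open MeasureTheory Real Set Filter Topology

namespace SchwartzMap

/-- The `L²` pairing `g ↦ ∫ f g` of real Schwartz functions. -/
def mulIntegral (f : SchwartzMap ℝ ℝ) : SchwartzMap ℝ ℝ →L[ℝ] ℝ :=
  (integralCLM ℝ volume).comp (pairing (ContinuousLinearMap.mul ℝ ℝ) f)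

theorem mulIntegral_apply (f g : SchwartzMap ℝ ℝ) : mulIntegral f g = ∫ x, f x * g x := by
  simp [mulIntegral, integralCLM_apply]

theorem mulIntegral_comm (f g : SchwartzMap ℝ ℝ) : mulIntegral f g = mulIntegral g f := by
  simp only [mulIntegral_apply, mul_comm]

theorem integrable_mul (f g : SchwartzMap ℝ ℝ) : Integrable (fun x => f x * g x) :=
  (pairing (ContinuousLinearMap.mul ℝ ℝ) f g).integrable

theorem mulIntegral_derivCLM_right (f g : SchwartzMap ℝ ℝ) :
    mulIntegral f (derivCLM ℝ ℝ g) = -mulIntegral (derivCLM ℝ ℝ f) g := by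
  simp only [mulIntegral_apply, derivCLM_apply]
  exact integral_mul_deriv_eq_neg_deriv_mul f g

theorem mulIntegral_derivCLM_self (f : SchwartzMap ℝ ℝ) :
    mulIntegral f (derivCLM ℝ ℝ f) = 0 := by
  have h := mulIntegral_derivCLM_right f f
  rw [mulIntegral_comm (derivCLM ℝ ℝ f)] at h
  linarith

theorem inner_toLp_two (f g : SchwartzMap ℝ ℝ) :
    inner ℝ (f.toLp 2) (g.toLp 2) = mulIntegral f g := by
  rw [L2.inner_def, mulIntegral_apply]
  refine integral_congr_ae ?_
  filter_upwards [f.coeFn_toLp 2, g.coeFn_toLp 2] with x hf hg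
  simp [hf, hg, mul_comm]

theorem coe_iterate_derivCLM (f : SchwartzMap ℝ ℝ) (n : ℕ) :
    ⇑((derivCLM ℝ ℝ)^[n] f) = iteratedDeriv n f := by
  induction n with
  | zero => simp
  | succ n ih =>
    ext x
    rw [Function.iterate_succ_apply', derivCLM_apply, ih, iteratedDeriv_succ]

/-- A curve of Schwartz functions with convergent difference quotients at `t` is differentiable
at `t` after composition with a continuous linear map into a normed space. -/
theorem hasDerivWithinAt_clm_comp {E : Type*} [NormedAddCommGroup E] [NormedSpace ℝ E]
    (L : SchwartzMap ℝ ℝ →L[ℝ] E) {u : ℝ → SchwartzMap ℝ ℝ} {u' : SchwartzMap ℝ ℝ} {s : Set ℝ}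
    {t : ℝ} (h : Tendsto (fun h : ℝ => h⁻¹ • (u (t + h) - u t))
      (𝓝[{h : ℝ | h ≠ 0 ∧ t + h ∈ s}] 0) (𝓝 u')) :
    HasDerivWithinAt (fun τ => L (u τ)) (L u') s t := by
  rw [hasDerivWithinAt_iff_tendsto_slope]
  have hshift : Tendsto (fun τ : ℝ => τ - t) (𝓝[s \ {t}] t)
      (𝓝[{h : ℝ | h ≠ 0 ∧ t + h ∈ s}] 0) := by
    refine tendsto_nhdsWithin_iff.2 ⟨?_, ?_⟩
    · have : Tendsto (fun τ : ℝ => τ - t) (𝓝 t) (𝓝 (t - t)) :=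
        (continuous_id.sub continuous_const).tendsto t
      rw [sub_self] at this
      exact this.mono_left nhdsWithin_le_nhds
    · filter_upwards [self_mem_nhdsWithin] with τ hτ
      exact ⟨sub_ne_zero.2 hτ.2, by simpa using hτ.1⟩
  refine ((L.continuous.tendsto u').comp (h.comp hshift)).congr fun τ => ?_
  simp [slope_def_module]

/-- The derivative of `τ ↦ ∫ (A u(τ))²` along a differentiable curve of Schwartz functions. -/
theorem hasDerivWithinAt_mulIntegral_self (A : SchwartzMap ℝ ℝ →L[ℝ] SchwartzMap ℝ ℝ)
    {u : ℝ → SchwartzMap ℝ ℝ} {u' : SchwartzMap ℝ ℝ} {s : Set ℝ} {t : ℝ}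
    (h : Tendsto (fun h : ℝ => h⁻¹ • (u (t + h) - u t))
      (𝓝[{h : ℝ | h ≠ 0 ∧ t + h ∈ s}] 0) (𝓝 u')) :
    HasDerivWithinAt (fun τ => mulIntegral (A (u τ)) (A (u τ)))
      (2 * mulIntegral (A (u t)) (A u')) s t := by
  have hL := hasDerivWithinAt_clm_comp ((toLpCLM ℝ ℝ 2 volume).comp A) h
  have hi := hL.inner ℝ hL
  simp only [ContinuousLinearMap.comp_apply, toLpCLM_apply, inner_toLp_two] at hi
  rwa [mulIntegral_comm (A u'), ← two_mul] at hi

end SchwartzMap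

open SchwartzMap in
/-- Testing the fifth-order KdV–BBM equation, with `v` in the place of the time derivative,
against the solution itself. -/
theorem mulIntegral_of_kdvBBM (γ1 δ1 γ2 δ2 γ : ℝ) (u v : SchwartzMap ℝ ℝ)
    (heq : ∀ x : ℝ,
      v x + deriv (fun y => u y) x
        - γ1 * iteratedDeriv 2 (fun y => v y) x
        + γ2 * iteratedDeriv 3 (fun y => u y) x
        + δ1 * iteratedDeriv 4 (fun y => v y) x
        + δ2 * iteratedDeriv 5 (fun y => u y) x
        + (3 / 4) * deriv (fun y => u y ^ 2) x
        + γ * iteratedDeriv 3 (fun y => u y ^ 2) x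
        - (7 / 48) * deriv (fun y => (deriv (fun z => u z) y) ^ 2) x
        - (1 / 8) * deriv (fun y => u y ^ 3) x = 0) :
    mulIntegral u v + γ1 * mulIntegral (derivCLM ℝ ℝ u) (derivCLM ℝ ℝ v)
        + δ1 * mulIntegral (derivCLM ℝ ℝ (derivCLM ℝ ℝ u)) (derivCLM ℝ ℝ (derivCLM ℝ ℝ v))
      = (γ - 7 / 48) * ∫ x : ℝ, (deriv (fun y => u y) x) ^ 3 := by
  set d := derivCLM ℝ ℝ with hd
  set w := pairing (ContinuousLinearMap.mul ℝ ℝ) u u with hw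
  set q := pairing (ContinuousLinearMap.mul ℝ ℝ) (d u) (d u) with hq
  set c := pairing (ContinuousLinearMap.mul ℝ ℝ) w u with hc
  have hwu : (fun y => u y ^ 2) = w := by ext x; simp [hw, sq]
  have hqu : (fun y => (deriv (fun z => u z) y) ^ 2) = q := by
    ext x; simp [hq, hd, sq, derivCLM_apply]
  have hcu : (fun y => u y ^ 3) = c := by ext x; simp [hc, hw, pow_succ]
  have hcoe (f : SchwartzMap ℝ ℝ) : deriv f = d f := rfl
  have hsq (f : SchwartzMap ℝ ℝ) (x : ℝ) :
      d (pairing (ContinuousLinearMap.mul ℝ ℝ) f f) x = 2 * (f x * d f x) := by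
    have h := ((f.hasDerivAt x).mul (f.hasDerivAt x)).deriv
    refine Eq.trans h ?_
    rw [hcoe]
    ring
  have hdw (x : ℝ) : d w x = 2 * (u x * d u x) := hsq u x
  have hdq (x : ℝ) : d q x = 2 * (d u x * d (d u) x) := hsq (d u) x
  have hdc (x : ℝ) : d c x = 3 * (u x ^ 2 * d u x) := by
    have h := ((w.hasDerivAt x).mul (u.hasDerivAt x)).deriv
    refine Eq.trans h ?_
    rw [hcoe, hcoe, hdw, ← hwu]
    ring
  have hR : v + d u - γ1 • d (d v) + γ2 • d (d (d u)) + δ1 • d (d (d (d v)))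
      + δ2 • d (d (d (d (d u)))) + (3 / 4 : ℝ) • d w + γ • d (d (d w))
      - (7 / 48 : ℝ) • d q - (1 / 8 : ℝ) • d c = 0 := by
    ext x
    have h := heq x
    rw [hwu, hqu, hcu] at h
    simp only [← coe_iterate_derivCLM, ← hd, hcoe, Function.iterate_succ_apply,
      Function.iterate_zero_apply] at h
    simpa only [add_apply, sub_apply, smul_apply, zero_apply, smul_eq_mul] using h
  have ibp (f g : SchwartzMap ℝ ℝ) : mulIntegral f (d g) = -mulIntegral (d f) g :=
    mulIntegral_derivCLM_right f g
  have self (f : SchwartzMap ℝ ℝ) : mulIntegral f (d f) = 0 := mulIntegral_derivCLM_self f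
  have hu1 := self u
  have hu3 : mulIntegral u (d (d (d u))) = 0 := by rw [ibp, self, neg_zero]
  have hu5 : mulIntegral u (d (d (d (d (d u))))) = 0 := by
    rw [ibp, ibp, self, neg_zero, neg_zero]
  have hv2 : mulIntegral u (d (d v)) = -mulIntegral (d u) (d v) := ibp _ _
  have hv4 : mulIntegral u (d (d (d (d v)))) = mulIntegral (d (d u)) (d (d v)) := by
    rw [ibp, ibp, neg_neg]
  have hw1 : mulIntegral u (d w) = 0 := by
    have h1 : mulIntegral u (d w) = 2 * mulIntegral (d u) w := by
      simp only [mulIntegral_apply, ← integral_const_mul, hdw, ← hwu]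
      congr with x; ring
    linarith [ibp u w]
  have hc1 : mulIntegral u (d c) = 0 := by
    have h1 : mulIntegral u (d c) = 3 * mulIntegral (d u) c := by
      simp only [mulIntegral_apply, ← integral_const_mul, hdc, ← hcu]
      congr with x; ring
    linarith [ibp u c]
  have hq1 : mulIntegral u (d q) = -∫ x : ℝ, (deriv (fun y => u y) x) ^ 3 := by
    rw [ibp, mulIntegral_apply]
    congr 2 with x
    rw [← hqu, hd, derivCLM_apply]
    ring
  have hw3 : mulIntegral u (d (d (d w))) = mulIntegral u (d q) := by
    rw [ibp, ibp, neg_neg]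
    simp only [mulIntegral_apply, hdw, hdq]
    congr with x; ring
  have h := congrArg (mulIntegral u) hR
  simp only [map_add, map_sub, map_smul, map_zero, smul_eq_mul, hu1, hu3, hu5, hv2, hv4, hw1, hc1,
    hw3, hq1] at h
  linarith

theorem energy_identity (γ1 δ1 γ2 δ2 γ T : ℝ) (hγ1 : 0 < γ1) (hδ1 : 0 < δ1)
    (hT : 0 < T)
    (η : ℝ → SchwartzMap ℝ ℝ) (D : ℕ → ℝ → SchwartzMap ℝ ℝ) (hD0 : D 0 = η)
    -- `t ↦ η(·,t)` is smooth from `[0,T]` into the Schwartz space, with n-th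
    -- time derivative `D n`:
    (hDdiff : ∀ n : ℕ, ∀ t ∈ Icc (0 : ℝ) T,
      Tendsto (fun h : ℝ => h⁻¹ • (D n (t + h) - D n t))
        (nhdsWithin 0 {h : ℝ | h ≠ 0 ∧ t + h ∈ Icc (0 : ℝ) T}) (nhds (D (n + 1) t)))
    -- `η` solves the fifth-order KdV–BBM equation on `ℝ × [0,T]`:
    (heq : ∀ t ∈ Icc (0 : ℝ) T, ∀ x : ℝ,
      D 1 t x + deriv (fun y => η t y) x
        - γ1 * iteratedDeriv 2 (fun y => D 1 t y) x
        + γ2 * iteratedDeriv 3 (fun y => η t y) x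
        + δ1 * iteratedDeriv 4 (fun y => D 1 t y) x
        + δ2 * iteratedDeriv 5 (fun y => η t y) x
        + (3 / 4) * deriv (fun y => η t y ^ 2) x
        + γ * iteratedDeriv 3 (fun y => η t y ^ 2) x
        - (7 / 48) * deriv (fun y => (deriv (fun z => η t z) y) ^ 2) x
        - (1 / 8) * deriv (fun y => η t y ^ 3) x = 0) :
    -- conclusion: the energy identity
    ∀ t ∈ Icc (0 : ℝ) T,
      HasDerivWithinAt
        (fun τ : ℝ => (1 / 2) * ∫ x : ℝ,
          (η τ x ^ 2 + γ1 * (deriv (fun y => η τ y) x) ^ 2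
            + δ1 * (iteratedDeriv 2 (fun y => η τ y) x) ^ 2))
        ((γ - 7 / 48) * ∫ x : ℝ, (deriv (fun y => η t y) x) ^ 3)
        (Icc (0 : ℝ) T) t := by
  intro t ht
  have hη := hDdiff 0 t ht
  rw [hD0] at hη
  have h0 := SchwartzMap.hasDerivWithinAt_mulIntegral_self (ContinuousLinearMap.id ℝ _) hη
  have h1 := SchwartzMap.hasDerivWithinAt_mulIntegral_self (SchwartzMap.derivCLM ℝ ℝ) hη
  have h2 := SchwartzMap.hasDerivWithinAt_mulIntegral_self
    ((SchwartzMap.derivCLM ℝ ℝ).comp (SchwartzMap.derivCLM ℝ ℝ)) hη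
  have hE := ((h0.add (h1.const_mul γ1)).add (h2.const_mul δ1)).const_mul (1 / 2)
  rw [← mulIntegral_of_kdvBBM γ1 δ1 γ2 δ2 γ (η t) (D 1 t) (heq t ht)]
  refine (hE.congr_deriv ?_).congr_of_mem (fun τ _ => ?_) ht
  · simp only [ContinuousLinearMap.comp_apply, ContinuousLinearMap.id_apply, zero_add]
    ring
  · have hd1 : deriv (fun y => η τ y) = SchwartzMap.derivCLM ℝ ℝ (η τ) := rfl
    have hd2 : iteratedDeriv 2 (fun y => η τ y)
        = SchwartzMap.derivCLM ℝ ℝ (SchwartzMap.derivCLM ℝ ℝ (η τ)) :=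
      (SchwartzMap.coe_iterate_derivCLM (η τ) 2).symm
    have hi (f : SchwartzMap ℝ ℝ) : Integrable (fun x => f x ^ 2) := by
      simpa only [sq] using f.integrable_mul f
    have hi' (f g : SchwartzMap ℝ ℝ) : Integrable (fun x => f x ^ 2 + γ1 * g x ^ 2) :=
      (hi f).add ((hi g).const_mul γ1)
    simp only [hd1, hd2]
    rw [integral_add (hi' _ _) ((hi _).const_mul _), integral_add (hi _) ((hi _).const_mul _), integral_const_mul, integral_const_mul]
    simp [SchwartzMap.mulIntegral_apply, sq]
end
end
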